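/- Let m and m' be models such that m' results from traversing a single minimal transition x ← P (for some pattern P) or x ← e (for some expression e) from m, i.e., m' = m[x ← m'] where m.x is an unknown, and let σ be an environment. Then for every description d' generated by m' in σ, the x-context d = d'.x̄ is a description generated by m in σ: d' ∈ m'[σ] implies d'.x̄ ∈ m[σ]. -/

import Mathlib

/-- A k-ary pattern: a relation between a whole value and a list of part values,
such that the whole is unique given the parts. -/
structure Pattern (V : Type) where
  rel : V → List V → Prop
  functional : ∀ (vs : List V) (v v' : V), rel v vs → rel v' vs → v = v'

/-- A model: a finite tree whose nodes carry variables (naturals) and are either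
unknowns, expressions, or pattern nodes with submodels. -/
inductive Model (V E : Type) : Type where
  | unknown : ℕ → Model V E
  | expr : ℕ → E → Model V E
  | pat : ℕ → Pattern V → List (Model V E) → Model V E

/-- A description: a finite tree assigning a value to each variable. -/
inductive Descr (V : Type) : Type where
  | atom : ℕ → V → Descr V
  | comp : ℕ → V → Pattern V → List (Descr V) → Descr V

def Descr.value {V : Type} : Descr V → V
  | .atom _ v => v
  | .comp _ v _ _ => v

def Descr.rootVar {V : Type} : Descr V → ℕ
  | .atom x _ => x
  | .comp x _ _ _ => x

def Model.rootVar {V E : Type} : Model V E → ℕ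
  | .unknown x => x
  | .expr x _ => x
  | .pat x _ _ => x

/-- Variables of a model. -/
def Model.vars {V E : Type} : Model V E → List ℕ
  | .unknown x => [x]
  | .expr x _ => [x]
  | .pat x _ ms => x :: (ms.attach.map (fun m => m.1.vars)).flatten
decreasing_by
  simp_wf
  have := List.sizeOf_lt_of_mem m.2
  omega

/-- Variables of a description. -/
def Descr.vars {V : Type} : Descr V → List ℕ
  | .atom x _ => [x]
  | .comp x _ _ ds => x :: (ds.attach.map (fun d => d.1.vars)).flatten
decreasing_by
  simp_wf
  have := List.sizeOf_lt_of_mem d.2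
  omega

/-- The generation relation `d ∈ m[σ]`, parameterized by a partial evaluation
function for expressions. -/
inductive Gen {V E : Type} (ev : E → (ℕ → Option V) → Option V) :
    Model V E → (ℕ → Option V) → Descr V → Prop where
  | unknown (x : ℕ) (σ : ℕ → Option V) (v : V) :
      Gen ev (.unknown x) σ (.atom x v)
  | expr (x : ℕ) (e : E) (σ : ℕ → Option V) (v : V) :
      ev e σ = some v → Gen ev (.expr x e) σ (.atom x v)
  | pat (x : ℕ) (P : Pattern V) (ms : List (Model V E)) (σ : ℕ → Option V)
      (v : V) (ds : List (Descr V)) :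
      ms.length = ds.length →
      P.rel v (ds.map Descr.value) →
      (∀ (i : ℕ) (h₁ : i < ms.length) (h₂ : i < ds.length),
        Gen ev (ms.get ⟨i, h₁⟩) σ (ds.get ⟨i, h₂⟩)) →
      Gen ev (.pat x P ms) σ (.comp x v P ds)

/-- `Model.Splits m x f c`: the variable `x` occurs in `m`, the `x`-factor (subtree
rooted at `x`) is `f`, and the `x`-context (with the subtree at `x` replaced by an
unknown) is `c`. -/
inductive Model.Splits {V E : Type} : Model V E → ℕ → Model V E → Model V E → Prop where
  | here (m : Model V E) : Model.Splits m m.rootVar m (.unknown m.rootVar)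
  | there (y : ℕ) (P : Pattern V) (ms : List (Model V E)) (i : ℕ) (h : i < ms.length)
      (x : ℕ) (f c : Model V E) :
      Model.Splits (ms.get ⟨i, h⟩) x f c →
      Model.Splits (.pat y P ms) x f (.pat y P (ms.set i c))

/-- `Descr.Splits d x f c`: the variable `x` occurs in `d`, the `x`-factor is `f`,
and the `x`-context (subtree at `x` replaced by an atomic description carrying the
value at `x`) is `c`. -/
inductive Descr.Splits {V : Type} : Descr V → ℕ → Descr V → Descr V → Prop where
  | here (d : Descr V) : Descr.Splits d d.rootVar d (.atom d.rootVar d.value)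
  | there (y : ℕ) (v : V) (P : Pattern V) (ds : List (Descr V)) (i : ℕ) (h : i < ds.length)
      (x : ℕ) (f c : Descr V) :
      Descr.Splits (ds.get ⟨i, h⟩) x f c →
      Descr.Splits (.comp y v P ds) x f (.comp y v P (ds.set i c))

/-- `Model.ReplaceAt m x m₀ m'`: the model `m'` results from `m` by replacing the
unknown leaf carrying variable `x` by the submodel `m₀` (i.e. `m' = m[x ← m₀]`
where `m.x` is an unknown). -/
inductive Model.ReplaceAt {V E : Type} : Model V E → ℕ → Model V E → Model V E → Prop where
  | here (x : ℕ) (m₀ : Model V E) : Model.ReplaceAt (.unknown x) x m₀ m₀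
  | there (y : ℕ) (P : Pattern V) (ms : List (Model V E)) (i : ℕ) (h : i < ms.length)
      (x : ℕ) (m₀ r : Model V E) :
      Model.ReplaceAt (ms.get ⟨i, h⟩) x m₀ r →
      Model.ReplaceAt (.pat y P ms) x m₀ (.pat y P (ms.set i r))

theorem Model.vars_pat {V E : Type} (x : ℕ) (P : Pattern V) (ms : List (Model V E)) :
    (Model.pat x P ms).vars = x :: (ms.map Model.vars).flatten := by
  rw [Model.vars]
  congr 2
  exact List.attach_map_val (l := ms) (f := Model.vars)

theorem Descr.Splits.value_eq {V : Type} {d : Descr V} {x : ℕ} {f c : Descr V}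
    (h : d.Splits x f c) : c.value = d.value := by
  cases h <;> rfl

theorem Gen.rootVar_eq {V E : Type} {ev : E → (ℕ → Option V) → Option V}
    {m : Model V E} {σ : ℕ → Option V} {d : Descr V} (h : Gen ev m σ d) :
    d.rootVar = m.rootVar := by
  cases h <;> rfl

theorem Model.rootVar_mem {V E : Type} (m : Model V E) : m.rootVar ∈ m.vars := by
  cases m <;> simp [Model.rootVar, Model.vars]

theorem Gen.mem_of_splits {V E : Type} {ev : E → (ℕ → Option V) → Option V}
    {d : Descr V} {x : ℕ} {f c : Descr V} (hs : d.Splits x f c) :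
    ∀ {m : Model V E} {σ : ℕ → Option V}, Gen ev m σ d → x ∈ m.vars := by
  induction hs with
  | here d => intro m σ h; rw [h.rootVar_eq]; exact m.rootVar_mem
  | there y v P ds i hi x f c _ ih =>
    intro m σ h
    cases h with
    | pat _ _ ms _ _ _ hlen hrel hch =>
      rw [Model.vars_pat]
      refine List.mem_cons_of_mem _ (List.mem_flatten.2 ⟨_, List.mem_map.2 ⟨_, ?_, rfl⟩,
        ih (hch i (hlen ▸ hi) hi)⟩)
      exact List.get_mem _ _

theorem Model.ReplaceAt.mem {V E : Type} {m m₀ m' : Model V E} {x : ℕ}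
    (h : Model.ReplaceAt m x m₀ m') (hx : x ∈ m₀.vars) : x ∈ m'.vars := by
  induction h with
  | here => exact hx
  | there y P ms i hi x m₀ r _ ih =>
    rw [Model.vars_pat]
    exact List.mem_cons_of_mem _ (List.mem_flatten.2 ⟨_, List.mem_map.2
      ⟨r, List.mem_set hi r, rfl⟩, ih hx⟩)

theorem ctx_aux {V E : Type} (ev : E → (ℕ → Option V) → Option V)
    {m m' m₀ : Model V E} {x : ℕ} (σ : ℕ → Option V)
    (hrep : Model.ReplaceAt m x m₀ m') (hroot : m₀.rootVar = x) :
    m'.vars.Nodup → ∀ d' dx dc : Descr V, d'.Splits x dx dc → Gen ev m' σ d' →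
    Gen ev m σ dc := by
  induction hrep with
  | here x m₀ =>
    intro hnd d' dx dc hs hg
    cases hs with
    | here =>
      rw [hg.rootVar_eq, hroot]
      exact Gen.unknown _ _ _
    | there y v P ds i hi _ _ c hs =>
      cases hg with
      | pat _ _ ms _ _ _ hlen hrel hch =>
        exfalso
        rw [Model.vars_pat] at hnd
        have := Gen.mem_of_splits hs (hch i (hlen ▸ hi) hi)
        have hyx : y = x := hroot
        subst hyx
        exact (List.nodup_cons.1 hnd).1 (List.mem_flatten.2
          ⟨_, List.mem_map.2 ⟨_, List.get_mem _ _, rfl⟩, this⟩)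
  | there y P ms i hi x m₀ r hr ih =>
    intro hnd d' dx dc hs hg
    have hxr : x ∈ r.vars := hr.mem (hroot ▸ m₀.rootVar_mem)
    rw [Model.vars_pat] at hnd
    obtain ⟨hy, hnd⟩ := List.nodup_cons.1 hnd
    rw [List.nodup_flatten] at hnd
    obtain ⟨hnd1, hnd2⟩ := hnd
    have hrm : r.vars ∈ (ms.set i r).map Model.vars :=
      List.mem_map.2 ⟨r, List.mem_set hi r, rfl⟩
    cases hg with
    | pat _ _ _ _ v ds hlen hrel hch =>
      have hlen' : ms.length = ds.length := by simpa using hlen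
      generalize hD : Descr.comp y v P ds = D at hs
      cases hs with
      | here =>
        subst hD
        exact absurd (List.mem_flatten.2 ⟨_, hrm, hxr⟩) hy
      | there y' v' P' ds' j hj _ _ c hs =>
        cases hD
        have hj' : j < (ms.set i r).length := hlen ▸ hj
        have hxj := Gen.mem_of_splits hs (hch j hj' hj)
        have hij : i = j := by
          by_contra hne
          rw [List.pairwise_iff_getElem] at hnd2
          rcases Nat.lt_or_gt_of_ne hne with hlt | hlt
          · have := hnd2 i j (by simpa using hi) (by simpa using hj') hlt
            simp only [List.getElem_map, List.getElem_set_self] at this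
            exact this hxr hxj
          · have := hnd2 j i (by simpa using hj') (by simpa using hi) hlt
            simp only [List.getElem_map, List.getElem_set_self] at this
            exact this hxj hxr
        subst hij
        have hgi := hch i hj' hj
        simp only [List.get_eq_getElem, List.getElem_set_self] at hgi
        have hc := ih hroot (hnd1 _ hrm) _ _ _ hs hgi
        refine Gen.pat _ _ _ _ _ _ (by simpa using hlen') ?_ ?_
        · rw [List.map_set, hs.value_eq]
          have : (ds.map Descr.value).set i (ds.get ⟨i, hj⟩).value = ds.map Descr.value := by
            apply List.ext_getElem <;> simp [List.getElem_set]
            intro k hk h; subst h; rfl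
          rw [this]; exact hrel
        · intro k h1 h2
          by_cases hk : i = k
          · subst hk
            simpa using hc
          · have := hch k (by simpa using h1) (by simpa using h2)
            simpa [List.getElem_set, hk] using this

/-- Lemma 2 of the paper. Let `m'` result from a single minimal
transition at `x` from `m`: either `x ← P` (replacing the unknown at `x` by a
pattern node with fresh all-unknown children) or `x ← e` (replacing it by an
expression). Then for every description `d'` generated by `m'` in environment `σ`,
the `x`-context `d'.x̄` is generated by `m` in `σ`. -/
theorem context_of_gen_after_min_transition {V E : Type}
    (ev : E → (ℕ → Option V) → Option V)
    (m m' m₀ : Model V E) (x : ℕ) (σ : ℕ → Option V)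
    (hnodup : m'.vars.Nodup)
    (hmin : (∃ (P : Pattern V) (xs : List ℕ), m₀ = .pat x P (xs.map .unknown)) ∨
            (∃ e : E, m₀ = .expr x e))
    (hrep : Model.ReplaceAt m x m₀ m')
    (d' dx dc : Descr V)
    (hdsplit : d'.Splits x dx dc)
    (hgen : Gen ev m' σ d') :
    Gen ev m σ dc := by
  refine ctx_aux ev σ hrep ?_ hnodup d' dx dc hdsplit hgen
  rcases hmin with ⟨P, xs, rfl⟩ | ⟨e, rfl⟩ <;> rfl
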